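/- (Rank-based characterization for (k+1)-step linear predictors, statement 2.) Consider the chain-structured system with nonlinearity concentrated in x_k (as defined in the context), where additionally 𝒳 is open and convex, 𝒰 is open, and the dynamics map from 𝒳 × 𝒰 onto 𝒳 is surjective. Suppose the system admits a (k+1)-step linear predictor, and suppose rank(M_k) = r_k with 0 < r_k < n_k. Then there exists an invertible matrix T̄ ∈ ℝ^{n_k×n_k} such that, under the coordinate change col(x̄₁, …, x̄_{k+1}) := blockdiag(I_{n−n_k}, T̄)·x, with x̄_i = x_i for i = 1, …, k−1, x̄_k ∈ ℝ^{r_k}, x̄_{k+1} ∈ ℝ^{n_k−r_k}, the dynamics take the form x̄₁⁺ = M̄₁u + C̄₁x̄_{1:k} + ḡ₁(x̄_{k+1}); x̄_i⁺ = M̄_i x̄_{i−1} + C̄_i x̄_{i:k} + ḡ_i(x̄_{k+1}) for i = 2, …, k; x̄_{k+1}⁺ = M̄_{k+1} x̄_k + ḡ_{k+1}(x̄_{k+1}); where M̄_i has full row rank for i = 1, …, k, and the C̄_i and ḡ_i are suitable matrices and functions. -/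

import Mathlib

open Matrix

noncomputable section

/-- Index type for a block-partitioned state. -/
abbrev Blk {K : ℕ} (dims : Fin K → ℕ) : Type := (i : Fin K) × Fin (dims i)

/-- The `i`-th block of a block-partitioned state. -/
def blk {K : ℕ} {dims : Fin K → ℕ} (x : Blk dims → ℝ) (i : Fin K) : Fin (dims i) → ℝ :=
  fun j => x ⟨i, j⟩

/-- The `N`-step iterated dynamics `f_N`. -/
def iterDyn {ι : Type} {m : ℕ} (f : (ι → ℝ) → (Fin m → ℝ) → (ι → ℝ)) :
    (N : ℕ) → (ι → ℝ) → (Fin N → (Fin m → ℝ)) → (ι → ℝ)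
  | 0, x, _ => x
  | N + 1, x, u => f (iterDyn f N x (fun i => u i.castSucc)) (u (Fin.last N))

/-- The system `x⁺ = f(x,u)` admits an `N`-step linear predictor on `X`, `U`. -/
def HasNStepLinearPredictor {ι : Type} [Fintype ι] {m : ℕ}
    (f : (ι → ℝ) → (Fin m → ℝ) → (ι → ℝ))
    (X : Set (ι → ℝ)) (U : Set (Fin m → ℝ)) (N : ℕ) : Prop :=
  ∃ (Φ : (ι → ℝ) → (ι → ℝ)) (B : Matrix ι (Fin N × Fin m) ℝ),
    ∀ x ∈ X, ∀ u : Fin N → (Fin m → ℝ), (∀ i, u i ∈ U) →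
      iterDyn f N x u = Φ x + B.mulVec (fun p => u p.1 p.2)

/-- The chain-structured system with nonlinearity concentrated in the last block. -/
def IsChainSystem {k m : ℕ} (dims : Fin (k + 1) → ℕ)
    (f : (Blk dims → ℝ) → (Fin m → ℝ) → (Blk dims → ℝ))
    (X : Set (Blk dims → ℝ)) (U : Set (Fin m → ℝ))
    (M₀ : Matrix (Fin (dims 0)) (Fin m) ℝ)
    (M : (i : Fin k) → Matrix (Fin (dims i.succ)) (Fin (dims i.castSucc)) ℝ)
    (C : (i : Fin (k + 1)) → Matrix (Fin (dims i)) (Blk dims) ℝ)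
    (g : (i : Fin (k + 1)) → (Fin (dims (Fin.last k)) → ℝ) → Fin (dims i) → ℝ) : Prop :=
  (∀ i : Fin (k + 1), ∀ q : Blk dims,
      ¬((i : ℕ) ≤ (q.1 : ℕ) ∧ (q.1 : ℕ) < k) → ∀ j, C i j q = 0) ∧
  M₀.rank = dims 0 ∧
  (∀ i : Fin k, (i : ℕ) < k - 1 → (M i).rank = dims i.succ) ∧
  (∀ x ∈ X, ∀ u ∈ U,
    blk (f x u) 0 = M₀.mulVec u + (C 0).mulVec x + g 0 (blk x (Fin.last k)) ∧
    ∀ i : Fin k,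
      blk (f x u) i.succ =
        (M i).mulVec (blk x i.castSucc) + (C i.succ).mulVec x +
          g i.succ (blk x (Fin.last k)))

section Helpers

lemma mulVec_surjective_of_rank_eq {a b : ℕ} (A : Matrix (Fin a) (Fin b) ℝ) (h : A.rank = a) :
    Function.Surjective A.mulVec := by
  have : LinearMap.range A.mulVecLin = ⊤ := by
    apply Submodule.eq_top_of_finrank_eq
    rw [← Matrix.rank, h]; simp
  exact LinearMap.range_eq_top.mp this

lemma rank_eq_of_mulVec_surjective {a b : ℕ} (A : Matrix (Fin a) (Fin b) ℝ)
    (h : Function.Surjective A.mulVec) : A.rank = a := by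
  have : LinearMap.range A.mulVecLin = ⊤ := LinearMap.range_eq_top.mpr h
  rw [Matrix.rank, this]; simp

/-- A map that agrees locally, along the range of `P`, with an increment linear in the parameter
agrees globally with it on a convex set. -/
lemma Convex.eq_add_of_eventually_eq_add {V E F : Type*}
    [NormedAddCommGroup V] [NormedSpace ℝ V] [AddCommGroup E] [Module ℝ E]
    [AddCommGroup F] [Module ℝ F] {Y : Set E} (hY : Convex ℝ Y)
    (P : V →ₗ[ℝ] E) (D : V →ₗ[ℝ] F) (G : E → F)
    (hloc : ∀ y ∈ Y, ∀ᶠ v in nhds (0 : V), G (y + P v) = G y + D v)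
    {y : E} (hy : y ∈ Y) {v : V} (hy' : y + P v ∈ Y) :
    G (y + P v) = G y + D v := by
  let h : unitInterval → F := fun t => G (y + (t : ℝ) • P v) - (t : ℝ) • D v
  have hlc : IsLocallyConstant h := by
    rw [IsLocallyConstant.iff_eventually_eq]
    intro t
    have hmem : y + (t : ℝ) • P v ∈ Y := hY.add_smul_mem hy hy' t.2
    have htend : Filter.Tendsto (fun s : unitInterval => ((s : ℝ) - t) • v) (nhds t)
        (nhds 0) := by
      have : Continuous (fun s : unitInterval => ((s : ℝ) - t) • v) := by fun_prop
      simpa using this.tendsto t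
    filter_upwards [htend.eventually (hloc _ hmem)] with s hs
    have e : y + (s : ℝ) • P v = y + (t : ℝ) • P v + P (((s : ℝ) - t) • v) := by
      rw [map_smul]; module
    simp only [h]
    rw [e, hs, map_smul]
    module
  have h01 := hlc.apply_eq_of_preconnectedSpace 1 0
  simp only [h, Set.Icc.coe_one, Set.Icc.coe_zero, one_smul, zero_smul, add_zero,
    sub_zero] at h01
  rw [← h01, sub_add_cancel]

section Iterates

variable {ι : Type} {m : ℕ} {f : (ι → ℝ) → (Fin m → ℝ) → (ι → ℝ)}
  {X : Set (ι → ℝ)} {U : Set (Fin m → ℝ)}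

lemma iterDyn_mem (hf : ∀ x ∈ X, ∀ u ∈ U, f x u ∈ X) (N : ℕ) {x : ι → ℝ} (hx : x ∈ X)
    {u : Fin N → (Fin m → ℝ)} (hu : ∀ i, u i ∈ U) : iterDyn f N x u ∈ X := by
  induction N with
  | zero => exact hx
  | succ N ih => exact hf _ (ih fun i => hu i.castSucc) _ (hu _)

lemma exists_iterDyn_eq (hsurj : ∀ y ∈ X, ∃ x ∈ X, ∃ u ∈ U, f x u = y) (N : ℕ)
    {y : ι → ℝ} (hy : y ∈ X) :
    ∃ x ∈ X, ∃ u : Fin N → (Fin m → ℝ), (∀ i, u i ∈ U) ∧ iterDyn f N x u = y := by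
  induction N generalizing y with
  | zero => exact ⟨y, hy, Fin.elim0, fun i => i.elim0, rfl⟩
  | succ N ih =>
    obtain ⟨z, hz, w, hw, rfl⟩ := hsurj y hy
    obtain ⟨x, hx, u, hu, rfl⟩ := ih hz
    refine ⟨x, hx, Fin.snoc u w, fun i => ?_, ?_⟩
    · induction i using Fin.lastCases with
      | last => simpa using hw
      | cast i => simpa using hu i
    · simp [iterDyn]

/-- While the nonlinearity is not excited, a perturbation of the first input propagates
linearly. -/
lemma iterDyn_perturb {E : Type*} [AddCommGroup E] [Module ℝ E]
    (hf : ∀ x ∈ X, ∀ u ∈ U, f x u ∈ X)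
    (A : (ι → ℝ) →ₗ[ℝ] (ι → ℝ)) (B : (Fin m → ℝ) →ₗ[ℝ] (ι → ℝ))
    (p : (ι → ℝ) →ₗ[ℝ] E) (G : E → (ι → ℝ))
    (hfA : ∀ x ∈ X, ∀ u ∈ U, f x u = A x + B u + G (p x))
    (v : Fin m → ℝ) (t : ℕ) (hp : ∀ s < t, p ((A ^ s) (B v)) = 0)
    {x : ι → ℝ} (hx : x ∈ X) {u u' : Fin (t + 1) → (Fin m → ℝ)}
    (hu : ∀ i, u i ∈ U) (hu' : ∀ i, u' i ∈ U)
    (h0 : u' 0 = u 0 + v) (hs : ∀ i : Fin t, u' i.succ = u i.succ) :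
    iterDyn f (t + 1) x u' = iterDyn f (t + 1) x u + (A ^ t) (B v) := by
  induction t with
  | zero =>
    change f x (u' 0) = f x (u 0) + B v
    rw [hfA x hx _ (hu' 0), hfA x hx _ (hu 0), h0, map_add]
    abel
  | succ t ih =>
    have key := ih (fun s hs => hp s (by omega)) (u := fun i => u i.castSucc)
      (u' := fun i => u' i.castSucc) (fun i => hu _) (fun i => hu' _) h0
      (fun i => hs i.castSucc)
    have hlast : u' (Fin.last (t + 1)) = u (Fin.last (t + 1)) := hs (Fin.last t)
    have m1 := iterDyn_mem hf (t + 1) hx (u := fun i => u i.castSucc) (fun i => hu _)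
    have m2 := iterDyn_mem hf (t + 1) hx (u := fun i => u' i.castSucc) (fun i => hu' _)
    change f (iterDyn f (t + 1) x fun i => u' i.castSucc) (u' (Fin.last (t + 1))) =
      f (iterDyn f (t + 1) x fun i => u i.castSucc) (u (Fin.last (t + 1))) + _
    rw [hfA _ m1 _ (hu _), hfA _ m2 _ (hu' _), key, hlast]
    simp only [map_add, hp t (by omega), add_zero, pow_succ', Module.End.mul_apply]
    abel

/-- A linear predictor forces the nonlinearity to be affine in the directions reached by the
first input at the last step. -/
lemma HasNStepLinearPredictor.exists_increment [Fintype ι] {E : Type*} [AddCommGroup E]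
    [Module ℝ E] (hUopen : IsOpen U)
    (hf : ∀ x ∈ X, ∀ u ∈ U, f x u ∈ X)
    (hsurj : ∀ y ∈ X, ∃ x ∈ X, ∃ u ∈ U, f x u = y)
    (A : (ι → ℝ) →ₗ[ℝ] (ι → ℝ)) (B : (Fin m → ℝ) →ₗ[ℝ] (ι → ℝ))
    (p : (ι → ℝ) →ₗ[ℝ] E) (G : E → (ι → ℝ))
    (hfA : ∀ x ∈ X, ∀ u ∈ U, f x u = A x + B u + G (p x))
    (t : ℕ) (hp : ∀ s < t, ∀ v, p ((A ^ s) (B v)) = 0)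
    (hpred : HasNStepLinearPredictor f X U (t + 2)) :
    ∃ D : (Fin m → ℝ) →ₗ[ℝ] (ι → ℝ), ∀ y ∈ p '' X, ∀ᶠ v in nhds (0 : Fin m → ℝ),
      G (y + (p ∘ₗ (A ^ t) ∘ₗ B) v) = G y + D v := by
  obtain ⟨Φ, Q, hQ⟩ := hpred
  let e : (Fin m → ℝ) →ₗ[ℝ] (Fin (t + 2) × Fin m → ℝ) :=
    LinearMap.pi fun q => if q.1 = 0 then LinearMap.proj q.2 else 0
  refine ⟨Q.mulVecLin ∘ₗ e - (A ^ (t + 1)) ∘ₗ B, ?_⟩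
  rintro _ ⟨z, hz, rfl⟩
  obtain ⟨x, hx, u, hu, rfl⟩ := exists_iterDyn_eq hsurj (t + 1) hz
  have hnear : ∀ᶠ v in nhds (0 : Fin m → ℝ), u 0 + v ∈ U := by
    have hc : Continuous fun v : Fin m → ℝ => u 0 + v := by fun_prop
    apply hc.tendsto 0
    simpa using hUopen.mem_nhds (hu 0)
  filter_upwards [hnear] with v hv
  let w : Fin (t + 2) → (Fin m → ℝ) := Fin.snoc u (u 0)
  let w' : Fin (t + 2) → (Fin m → ℝ) := Function.update w 0 (u 0 + v)
  have hw : ∀ i, w i ∈ U := by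
    intro i
    induction i using Fin.lastCases with
    | last => simpa [w] using hu 0
    | cast i => simpa [w] using hu i
  have hw' : ∀ i, w' i ∈ U := by
    intro i
    by_cases hi : i = 0
    · subst hi; simpa [w'] using hv
    · simpa [w', hi] using hw i
  have hwu : (fun i : Fin (t + 1) => w i.castSucc) = u := by
    funext i; simp [w]
  have hw0 : w 0 = u 0 := congrFun hwu 0
  have key := iterDyn_perturb hf A B p G hfA v t (fun s hs => hp s hs v) hx
    (u := u) (u' := fun i => w' i.castSucc) hu (fun i => hw' _)
    (by simp [w']) (fun i => by
      rw [← hwu]; simp [w'])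
  have hlast : w' (Fin.last (t + 1)) = w (Fin.last (t + 1)) := by
    simp [w']
  have e1 := hQ x hx w hw
  have e2 := hQ x hx w' hw'
  have hdiff : (fun q : Fin (t + 2) × Fin m => w' q.1 q.2) =
      (fun q => w q.1 q.2) + e v := by
    funext q
    by_cases hq : q.1 = 0
    · simp [w', e, hq, hw0]
    · simp [w', e, hq]
  rw [hdiff, mulVec_add, ← add_assoc, ← e1] at e2
  change f (iterDyn f (t + 1) x fun i => w' i.castSucc) (w' (Fin.last (t + 1))) =
      f (iterDyn f (t + 1) x fun i => w i.castSucc) (w (Fin.last (t + 1))) + _ at e2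
  have m2 := iterDyn_mem hf (t + 1) hx (u := fun i => w' i.castSucc) (fun i => hw' _)
  rw [hfA _ m2 _ (hw' _), hwu, hfA _ hz _ (hw _), hlast, key] at e2
  simp only [map_add] at e2
  have hA : (A ^ (t + 1)) (B v) = A ((A ^ t) (B v)) := by
    rw [pow_succ', Module.End.mul_apply]
  simp only [LinearMap.comp_apply, LinearMap.sub_apply, hA, Matrix.mulVecLin_apply]
  linear_combination e2

end Iterates

/-- A function that is affine with a fixed slope along the fibres of a projection splits. -/
lemma exists_fiberwise_split {E F L R : Type*} [AddCommGroup E] [Module ℝ E] [AddCommGroup F]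
    [Module ℝ F] [AddCommGroup L] [Module ℝ L]
    (Y : Set E) (pl : E →ₗ[ℝ] L) (pr : E → R) (Λ : L →ₗ[ℝ] F) (G : E → F)
    (h : ∀ y ∈ Y, ∀ y' ∈ Y, pr y = pr y' → G y' = G y + Λ (pl (y' - y))) :
    ∃ Γ : R → F, ∀ y ∈ Y, G y = Λ (pl y) + Γ (pr y) := by
  classical
  refine ⟨fun r => if hr : ∃ y ∈ Y, pr y = r then G hr.choose - Λ (pl hr.choose) else 0, ?_⟩
  intro y hy
  have hr : ∃ y' ∈ Y, pr y' = pr y := ⟨y, hy, rfl⟩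
  simp only [dif_pos hr]
  rw [h _ hr.choose_spec.1 y hy hr.choose_spec.2]
  simp only [map_sub]
  abel

/-- A basis whose first part spans a given subspace. -/
lemma exists_basis_adapted {n r : ℕ} (W : Submodule ℝ (Fin n → ℝ))
    (hW : Module.finrank ℝ W = r) :
    ∃ b : Module.Basis (Fin r ⊕ Fin (n - r)) ℝ (Fin n → ℝ),
      (∀ a, b (Sum.inl a) ∈ W) ∧ ∀ y ∈ W, ∀ a, b.repr y (Sum.inr a) = 0 := by
  obtain ⟨W', hW'⟩ := W.exists_isCompl
  have hfr : Module.finrank ℝ W' = n - r := by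
    have := Submodule.finrank_add_eq_of_isCompl hW'
    simp at this; omega
  let b := ((Module.finBasisOfFinrankEq ℝ W hW).prod
    (Module.finBasisOfFinrankEq ℝ W' hfr)).map (W.prodEquivOfIsCompl W' hW')
  refine ⟨b, fun a => ?_, fun y hy a => ?_⟩
  · simp [b]
  · have : (W.prodEquivOfIsCompl W' hW').symm y = ((⟨y, hy⟩ : W), 0) :=
      W.prodEquivOfIsCompl_symm_apply_left W' hW' ⟨y, hy⟩
    simp [b, this]

section Chain

variable {k m : ℕ} {dims : Fin (k + 2) → ℕ}

/-- Block extraction as a linear map. -/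
def blkLin (dims : Fin (k + 2) → ℕ) (i : Fin (k + 2)) :
    (Blk dims → ℝ) →ₗ[ℝ] (Fin (dims i) → ℝ) where
  toFun x := blk x i
  map_add' _ _ := rfl
  map_smul' _ _ := rfl

/-- The linear map with prescribed blocks. -/
def ofBlocks {V : Type*} [AddCommGroup V] [Module ℝ V]
    (φ : (i : Fin (k + 2)) → V →ₗ[ℝ] (Fin (dims i) → ℝ)) : V →ₗ[ℝ] (Blk dims → ℝ) :=
  LinearMap.pi fun q => LinearMap.proj q.2 ∘ₗ φ q.1

lemma blk_ofBlocks {V : Type*} [AddCommGroup V] [Module ℝ V]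
    (φ : (i : Fin (k + 2)) → V →ₗ[ℝ] (Fin (dims i) → ℝ)) (v : V) (i : Fin (k + 2)) :
    blk (ofBlocks φ v) i = φ i v := rfl

lemma blk_ext {x y : Blk dims → ℝ} (h : ∀ i, blk x i = blk y i) : x = y := by
  funext ⟨i, j⟩
  exact congrFun (h i) j

/-- The state part of the linear dynamics of a chain system. -/
def chainA (M : (i : Fin (k + 1)) → Matrix (Fin (dims i.succ)) (Fin (dims i.castSucc)) ℝ)
    (C : (i : Fin (k + 2)) → Matrix (Fin (dims i)) (Blk dims) ℝ) :
    (Blk dims → ℝ) →ₗ[ℝ] (Blk dims → ℝ) :=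
  ofBlocks (Fin.cons (C 0).mulVecLin
    (fun i => (M i).mulVecLin ∘ₗ blkLin dims i.castSucc + (C i.succ).mulVecLin))

/-- The input part of the linear dynamics of a chain system. -/
def chainB (M₀ : Matrix (Fin (dims 0)) (Fin m) ℝ) : (Fin m → ℝ) →ₗ[ℝ] (Blk dims → ℝ) :=
  ofBlocks (Fin.cons M₀.mulVecLin (fun _ => 0))

variable {f : (Blk dims → ℝ) → (Fin m → ℝ) → (Blk dims → ℝ)}
    {X : Set (Blk dims → ℝ)} {U : Set (Fin m → ℝ)}
    {M₀ : Matrix (Fin (dims 0)) (Fin m) ℝ}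
    {M : (i : Fin (k + 1)) → Matrix (Fin (dims i.succ)) (Fin (dims i.castSucc)) ℝ}
    {C : (i : Fin (k + 2)) → Matrix (Fin (dims i)) (Blk dims) ℝ}
    {g : (i : Fin (k + 2)) → (Fin (dims (Fin.last (k + 1))) → ℝ) → Fin (dims i) → ℝ}

lemma blk_chainA_zero (x : Blk dims → ℝ) : blk (chainA M C x) 0 = (C 0).mulVec x := rfl

lemma blk_chainA_succ (x : Blk dims → ℝ) (i : Fin (k + 1)) :
    blk (chainA M C x) i.succ = (M i).mulVec (blk x i.castSucc) + (C i.succ).mulVec x := rfl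

lemma blk_chainB_zero (u : Fin m → ℝ) : blk (chainB M₀ u) 0 = M₀.mulVec u := rfl

lemma blk_chainB_succ (u : Fin m → ℝ) (i : Fin (k + 1)) : blk (chainB M₀ u) i.succ = 0 := rfl

lemma IsChainSystem.eq_linear_add (h : IsChainSystem dims f X U M₀ M C g) :
    ∀ x ∈ X, ∀ u ∈ U, f x u = chainA M C x + chainB M₀ u +
      (fun q : Blk dims => g q.1 (blkLin dims (Fin.last (k + 1)) x) q.2) := by
  intro x hx u hu
  obtain ⟨h0, hs⟩ := h.2.2.2 x hx u hu
  apply blk_ext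
  intro i
  cases i using Fin.cases with
  | zero =>
    rw [h0]
    change _ = blk (chainA M C x) 0 + blk (chainB M₀ u) 0 + g 0 (blk x (Fin.last (k + 1)))
    rw [blk_chainA_zero, blk_chainB_zero, add_comm (M₀.mulVec u)]
  | succ i =>
    rw [hs i]
    change _ = blk (chainA M C x) i.succ + blk (chainB M₀ u) i.succ +
      g i.succ (blk x (Fin.last (k + 1)))
    rw [blk_chainA_succ, blk_chainB_succ, add_zero]

lemma mulVec_eq_zero_of_blk {i : Fin (k + 2)}
    (hC : ∀ q : Blk dims, ¬((i : ℕ) ≤ (q.1 : ℕ) ∧ (q.1 : ℕ) < k + 1) → ∀ j, C i j q = 0)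
    {z : Blk dims → ℝ} (hz : ∀ j : Fin (k + 2), i ≤ j → blk z j = 0) :
    (C i).mulVec z = 0 := by
  funext j
  refine Finset.sum_eq_zero fun q _ => ?_
  by_cases hq : i ≤ q.1
  · have : z q = 0 := congrFun (hz q.1 hq) q.2
    simp [this]
  · exact mul_eq_zero_of_left (hC q (fun h => hq h.1) j) _

/-- After `t` further steps the first input has only reached the blocks up to `t`. -/
lemma blk_chainA_pow_eq_zero (h : IsChainSystem dims f X U M₀ M C g) (v : Fin m → ℝ) (t : ℕ)
    (j : Fin (k + 2)) (hj : t < (j : ℕ)) :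
    blk ((chainA M C ^ t) (chainB M₀ v)) j = 0 := by
  induction t generalizing j with
  | zero =>
    cases j using Fin.cases with
    | zero => simp at hj
    | succ j => rfl
  | succ t ih =>
    cases j using Fin.cases with
    | zero => simp at hj
    | succ i =>
      rw [Fin.val_succ] at hj
      rw [pow_succ', Module.End.mul_apply, blk_chainA_succ, ih i.castSucc (by simp; omega),
        mulVec_zero, zero_add]
      apply mulVec_eq_zero_of_blk (h.1 i.succ)
      intro j hij
      rw [Fin.le_def, Fin.val_succ] at hij
      exact ih j (by omega)

lemma blk_chainA_pow_front_succ (h : IsChainSystem dims f X U M₀ M C g) (v : Fin m → ℝ)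
    (i : Fin (k + 1)) :
    blk ((chainA M C ^ (i.succ : ℕ)) (chainB M₀ v)) i.succ =
      (M i).mulVec (blk ((chainA M C ^ (i.castSucc : ℕ)) (chainB M₀ v)) i.castSucc) := by
  rw [Fin.val_succ, Fin.val_castSucc, pow_succ', Module.End.mul_apply, blk_chainA_succ,
    mulVec_eq_zero_of_blk (h.1 i.succ), add_zero]
  intro j hij
  rw [Fin.le_def, Fin.val_succ] at hij
  exact blk_chainA_pow_eq_zero h v _ j (by omega)

lemma blk_chainA_pow_front_surjective (h : IsChainSystem dims f X U M₀ M C g)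
    (i : Fin (k + 1)) :
    Function.Surjective fun v : Fin m → ℝ =>
      blk ((chainA M C ^ (i.castSucc : ℕ)) (chainB M₀ v)) i.castSucc := by
  induction i using Fin.induction with
  | zero => exact mulVec_surjective_of_rank_eq M₀ h.2.1
  | succ i ih =>
    have hM : Function.Surjective (M i.castSucc).mulVec :=
      mulVec_surjective_of_rank_eq _ (h.2.2.1 i.castSucc (by simp))
    intro z
    obtain ⟨y, rfl⟩ := hM z
    obtain ⟨v, rfl⟩ := ih y
    exact ⟨v, blk_chainA_pow_front_succ h v i.castSucc⟩

/-- The first input reaches exactly the range of the last coupling matrix. -/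
lemma exists_blk_last_eq (h : IsChainSystem dims f X U M₀ M C g)
    (z : Fin (dims (Fin.last k).castSucc) → ℝ) :
    ∃ v : Fin m → ℝ, blk ((chainA M C ^ (k + 1)) (chainB M₀ v)) (Fin.last (k + 1)) =
      (M (Fin.last k)).mulVec z := by
  obtain ⟨v, hv⟩ := blk_chainA_pow_front_surjective h (Fin.last k) z
  refine ⟨v, ?_⟩
  rw [← hv]
  exact blk_chainA_pow_front_succ h v (Fin.last k)

/-- The coupling matrices `C` act on the blocks before the last one only. -/
lemma IsChainSystem.mulVec_eq_sum (h : IsChainSystem dims f X U M₀ M C g)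
    (i : Fin (k + 2)) (x : Blk dims → ℝ) :
    (C i).mulVec x = ∑ j : Fin (k + 1),
      (Matrix.of fun a c => C i a ⟨j.castSucc, c⟩).mulVec (blk x j.castSucc) := by
  funext a
  rw [Finset.sum_apply, mulVec, dotProduct, Fintype.sum_sigma, Fin.sum_univ_castSucc]
  have hlast : ∀ c, C i a ⟨Fin.last (k + 1), c⟩ = 0 := fun c => h.1 i _ (by simp) a
  simp only [hlast, zero_mul, Finset.sum_const_zero, add_zero]
  rfl

/-- In coordinates adapted to the range of the last coupling matrix the nonlinearity is linear
in the components along that range. -/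
lemma IsChainSystem.exists_split (h : IsChainSystem dims f X U M₀ M C g)
    (hXconv : Convex ℝ X) (hUopen : IsOpen U)
    (hf : ∀ x ∈ X, ∀ u ∈ U, f x u ∈ X)
    (hsurj : ∀ y ∈ X, ∃ x ∈ X, ∃ u ∈ U, f x u = y)
    (hpred : HasNStepLinearPredictor f X U (k + 3))
    {α β : Type*} [Fintype α] [Fintype β]
    (b : Module.Basis (α ⊕ β) ℝ (Fin (dims (Fin.last (k + 1))) → ℝ))
    (hb : ∀ a, b (Sum.inl a) ∈ LinearMap.range (M (Fin.last k)).mulVecLin) :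
    ∃ (Λ : (α → ℝ) →ₗ[ℝ] (Blk dims → ℝ)) (Γ : (β → ℝ) → (Blk dims → ℝ)),
      ∀ x ∈ X, ∀ i, g i (blk x (Fin.last (k + 1))) =
        blk (Λ fun a => b.repr (blk x (Fin.last (k + 1))) (Sum.inl a)) i +
        blk (Γ fun a => b.repr (blk x (Fin.last (k + 1))) (Sum.inr a)) i := by
  obtain ⟨D, hD⟩ := hpred.exists_increment (t := k + 1) hUopen hf hsurj (chainA M C)
    (chainB M₀) (blkLin dims (Fin.last (k + 1))) (fun y q => g q.1 y q.2) h.eq_linear_add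
    (fun s hs v => blk_chainA_pow_eq_zero h v s _ (by simpa using hs))
  have hv : ∀ a, ∃ v, (blkLin dims (Fin.last (k + 1)) ∘ₗ (chainA M C ^ (k + 1)) ∘ₗ chainB M₀) v
      = b (Sum.inl a) := by
    intro a
    obtain ⟨z, hz⟩ := hb a
    obtain ⟨v, hv⟩ := exists_blk_last_eq h z
    exact ⟨v, hv.trans hz⟩
  choose v hv using hv
  let pl : (Fin (dims (Fin.last (k + 1))) → ℝ) →ₗ[ℝ] (α → ℝ) :=
    LinearMap.pi fun a => b.coord (Sum.inl a)
  have hfib : ∀ y ∈ blkLin dims (Fin.last (k + 1)) '' X,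
      ∀ y' ∈ blkLin dims (Fin.last (k + 1)) '' X,
      (fun a : β => b.repr y (Sum.inr a)) = (fun a => b.repr y' (Sum.inr a)) →
      (fun q : Blk dims => g q.1 y' q.2) =
        (fun q : Blk dims => g q.1 y q.2) +
          (D ∘ₗ Fintype.linearCombination ℝ v) (pl (y' - y)) := by
    intro y hy y' hy' hyy'
    have hsum : (blkLin dims (Fin.last (k + 1)) ∘ₗ (chainA M C ^ (k + 1)) ∘ₗ chainB M₀)
        (Fintype.linearCombination ℝ v (pl (y' - y))) = y' - y := by
      rw [Fintype.linearCombination_apply, map_sum]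
      simp only [map_smul _ _ (v _), hv]
      conv_rhs => rw [← b.sum_repr (y' - y), Fintype.sum_sum_type]
      have hz : ∀ a, b.repr y (Sum.inr a) = b.repr y' (Sum.inr a) := congrFun hyy'
      simp [hz, pl]
    have := (hXconv.linear_image (blkLin dims (Fin.last (k + 1)))).eq_add_of_eventually_eq_add
      _ D (fun y (q : Blk dims) => g q.1 y q.2) hD hy
      (v := Fintype.linearCombination ℝ v (pl (y' - y)))
      (by rw [hsum]; simpa using hy')
    rw [hsum] at this
    simpa using this
  obtain ⟨Γ, hΓ⟩ := exists_fiberwise_split (blkLin dims (Fin.last (k + 1)) '' X) pl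
    (fun y (a : β) => b.repr y (Sum.inr a)) (D ∘ₗ Fintype.linearCombination ℝ v)
    (fun y (q : Blk dims) => g q.1 y q.2) hfib
  refine ⟨D ∘ₗ Fintype.linearCombination ℝ v, Γ, fun x hx i => ?_⟩
  exact congrArg (fun z => blk z i) (hΓ _ ⟨x, hx, rfl⟩)

end Chain

end Helpers

/-- **Rank-based characterization for `(k+1)`-step linear predictors, statement 2.**
For a chain-structured system with `k+2` Lean-blocks (the paper's `k` equals `k+2`) on an
open convex state set with open input set and surjective dynamics: if the system admits a
`(k+1)`-step linear predictor (paper count; `k+3` steps here) and `rank(M_k) = r_k` with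
`0 < r_k < n_k`, then there is an invertible matrix `T̄` acting on the last block only such
that, in the new coordinates (`x̄_i = x_i` for the first blocks and
`col(x̄_k, x̄_{k+1}) = T̄ x_k`), the dynamics again take a chain form in which the
nonlinearity is concentrated in the strictly smaller block `x̄_{k+1}`, all chain coefficient
matrices `M̄₁, …, M̄_k` have full row rank, and each `C̄_i` acts only on the blocks
`x̄_{i:k}`. -/
theorem chain_Mk_rank_deficient_decomposition
    {k m : ℕ} (dims : Fin (k + 2) → ℕ)
    (f : (Blk dims → ℝ) → (Fin m → ℝ) → (Blk dims → ℝ))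
    (X : Set (Blk dims → ℝ)) (U : Set (Fin m → ℝ))
    (hXopen : IsOpen X) (hXconv : Convex ℝ X) (hUopen : IsOpen U)
    (hf : ∀ x ∈ X, ∀ u ∈ U, f x u ∈ X)
    (hsurj : ∀ y ∈ X, ∃ x ∈ X, ∃ u ∈ U, f x u = y)
    (M₀ : Matrix (Fin (dims 0)) (Fin m) ℝ)
    (M : (i : Fin (k + 1)) → Matrix (Fin (dims i.succ)) (Fin (dims i.castSucc)) ℝ)
    (C : (i : Fin (k + 2)) → Matrix (Fin (dims i)) (Blk dims) ℝ)
    (g : (i : Fin (k + 2)) → (Fin (dims (Fin.last (k + 1))) → ℝ) → Fin (dims i) → ℝ)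
    (hchain : IsChainSystem dims f X U M₀ M C g)
    (hpred : HasNStepLinearPredictor f X U (k + 3))
    (rk : ℕ) (hrk_pos : 0 < rk) (hrk_lt : rk < dims (Fin.last (k + 1)))
    (hMk : (M (Fin.last k)).rank = rk) :
    ∃ (T : Matrix (Fin rk ⊕ Fin (dims (Fin.last (k + 1)) - rk))
            (Fin (dims (Fin.last (k + 1)))) ℝ)
      (S : Matrix (Fin (dims (Fin.last (k + 1))))
            (Fin rk ⊕ Fin (dims (Fin.last (k + 1)) - rk)) ℝ),
      T * S = 1 ∧ S * T = 1 ∧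
      ∃ (Mb₀ : Matrix (Fin (dims (0 : Fin (k + 1)).castSucc)) (Fin m) ℝ)
        (Mb : (i : Fin k) →
          Matrix (Fin (dims i.succ.castSucc)) (Fin (dims i.castSucc.castSucc)) ℝ)
        (MbK : Matrix (Fin rk) (Fin (dims (Fin.last k).castSucc)) ℝ)
        (MbK1 : Matrix (Fin (dims (Fin.last (k + 1)) - rk)) (Fin rk) ℝ)
        (Cb : (i : Fin (k + 1)) → (j : Fin (k + 1)) →
          Matrix (Fin (dims i.castSucc)) (Fin (dims j.castSucc)) ℝ)
        (CbK : (i : Fin (k + 1)) → Matrix (Fin (dims i.castSucc)) (Fin rk) ℝ)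
        (CbKK : Matrix (Fin rk) (Fin rk) ℝ)
        (gb : (i : Fin (k + 1)) →
          (Fin (dims (Fin.last (k + 1)) - rk) → ℝ) → Fin (dims i.castSucc) → ℝ)
        (gbK : (Fin (dims (Fin.last (k + 1)) - rk) → ℝ) → Fin rk → ℝ)
        (gbK1 : (Fin (dims (Fin.last (k + 1)) - rk) → ℝ) →
          Fin (dims (Fin.last (k + 1)) - rk) → ℝ),
        Mb₀.rank = dims (0 : Fin (k + 1)).castSucc ∧
        (∀ i : Fin k, (Mb i).rank = dims i.succ.castSucc) ∧
        MbK.rank = rk ∧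
        (∀ i j : Fin (k + 1), (j : ℕ) < (i : ℕ) → Cb i j = 0) ∧
        (∀ x ∈ X, ∀ u ∈ U,
          (blk (f x u) (0 : Fin (k + 1)).castSucc =
            Mb₀.mulVec u
              + (∑ j : Fin (k + 1), (Cb 0 j).mulVec (blk x j.castSucc))
              + (CbK 0).mulVec (fun a => T.mulVec (blk x (Fin.last (k + 1))) (Sum.inl a))
              + gb 0 (fun a => T.mulVec (blk x (Fin.last (k + 1))) (Sum.inr a))) ∧
          (∀ i : Fin k,
            blk (f x u) i.succ.castSucc =
              (Mb i).mulVec (blk x i.castSucc.castSucc)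
                + (∑ j : Fin (k + 1), (Cb i.succ j).mulVec (blk x j.castSucc))
                + (CbK i.succ).mulVec
                    (fun a => T.mulVec (blk x (Fin.last (k + 1))) (Sum.inl a))
                + gb i.succ (fun a => T.mulVec (blk x (Fin.last (k + 1))) (Sum.inr a))) ∧
          ((fun a => T.mulVec (blk (f x u) (Fin.last (k + 1))) (Sum.inl a)) =
              MbK.mulVec (blk x (Fin.last k).castSucc)
                + CbKK.mulVec (fun a => T.mulVec (blk x (Fin.last (k + 1))) (Sum.inl a))
                + gbK (fun a => T.mulVec (blk x (Fin.last (k + 1))) (Sum.inr a))) ∧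
          ((fun a => T.mulVec (blk (f x u) (Fin.last (k + 1))) (Sum.inr a)) =
              MbK1.mulVec (fun a => T.mulVec (blk x (Fin.last (k + 1))) (Sum.inl a))
                + gbK1 (fun a => T.mulVec (blk x (Fin.last (k + 1))) (Sum.inr a)))) := by
  let ML : Matrix (Fin (dims (Fin.last (k + 1)))) (Fin (dims (Fin.last k).castSucc)) ℝ :=
    M (Fin.last k)
  obtain ⟨b, hbW, hbr⟩ := exists_basis_adapted (LinearMap.range ML.mulVecLin) hMk
  obtain ⟨Λ, Γ, hg⟩ := hchain.exists_split hXconv hUopen hf hsurj hpred b hbW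
  let e := Pi.basisFun ℝ (Fin (dims (Fin.last (k + 1))))
  let T := LinearMap.toMatrix e b LinearMap.id
  have hT : ∀ y, T.mulVec y = b.repr y := fun y => by
    exact LinearMap.toMatrix_mulVec_repr e b LinearMap.id y
  have hΛ : ∀ i c, blk (Λ c) i = (LinearMap.toMatrix' (blkLin dims i ∘ₗ Λ)).mulVec c := by
    intro i c
    rw [LinearMap.toMatrix'_mulVec]; rfl
  refine ⟨T, LinearMap.toMatrix b e LinearMap.id, ?_, ?_, M₀, fun i => M i.castSucc,
    (T * ML).submatrix Sum.inl id,
    (T * LinearMap.toMatrix' (blkLin dims (Fin.last (k + 1)) ∘ₗ Λ)).submatrix Sum.inr id,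
    fun i j => Matrix.of fun a c => C i.castSucc a ⟨j.castSucc, c⟩,
    fun i => LinearMap.toMatrix' (blkLin dims i.castSucc ∘ₗ Λ),
    (T * LinearMap.toMatrix' (blkLin dims (Fin.last (k + 1)) ∘ₗ Λ)).submatrix Sum.inl id,
    fun i w => blk (Γ w) i.castSucc,
    fun w a => T.mulVec (blk (Γ w) (Fin.last (k + 1))) (Sum.inl a),
    fun w a => T.mulVec (blk (Γ w) (Fin.last (k + 1))) (Sum.inr a),
    hchain.2.1, fun i => hchain.2.2.1 i.castSucc (by simp), ?_, ?_, ?_⟩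
  · rw [← LinearMap.toMatrix_comp, LinearMap.id_comp, LinearMap.toMatrix_id]
  · rw [← LinearMap.toMatrix_comp, LinearMap.id_comp, LinearMap.toMatrix_id]
  · apply rank_eq_of_mulVec_surjective
    intro c
    have hmem : ∑ a, c a • b (Sum.inl a) ∈ LinearMap.range ML.mulVecLin :=
      Submodule.sum_mem _ fun a _ => Submodule.smul_mem _ _ (hbW a)
    obtain ⟨z, hz⟩ := hmem
    refine ⟨z, ?_⟩
    funext a
    change (T * ML).mulVec z (Sum.inl a) = c a
    rw [← mulVec_mulVec]
    rw [mulVecLin_apply] at hz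
    rw [hz, hT]
    simp [Finsupp.single_apply]
  · intro i j hij
    ext a c
    exact hchain.1 i.castSucc _ (by simp; omega) a
  · intro x hx u hu
    obtain ⟨h0, hs⟩ := hchain.2.2.2 x hx u hu
    have hlast : blk (f x u) (Fin.last (k + 1)) =
        ML.mulVec (blk x (Fin.last k).castSucc) +
        ((LinearMap.toMatrix' (blkLin dims (Fin.last (k + 1)) ∘ₗ Λ)).mulVec
          (fun a => T.mulVec (blk x (Fin.last (k + 1))) (Sum.inl a)) +
        blk (Γ fun a => T.mulVec (blk x (Fin.last (k + 1))) (Sum.inr a))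
          (Fin.last (k + 1))) := by
      have hC : (C (Fin.last (k + 1))).mulVec x = 0 := by
        funext a
        exact Finset.sum_eq_zero fun q _ => mul_eq_zero_of_left
          (hchain.1 (Fin.last (k + 1)) q (by simp) a) _
      have hstep : blk (f x u) (Fin.last (k + 1)) =
          ML.mulVec (blk x (Fin.last k).castSucc) + (C (Fin.last (k + 1))).mulVec x +
            g (Fin.last (k + 1)) (blk x (Fin.last (k + 1))) := hs (Fin.last k)
      rw [hstep, hC, add_zero, hg x hx, hΛ, hT]
    refine ⟨?_, fun i => ?_, ?_, ?_⟩
    · rw [hg x hx, hchain.mulVec_eq_sum, hΛ, ← add_assoc] at h0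
      rw [hT]
      exact h0
    · have := hs i.castSucc
      rw [hg x hx, hchain.mulVec_eq_sum, hΛ, ← add_assoc] at this
      rw [hT]
      exact this
    · rw [hlast]
      funext a
      simp only [mulVec_add, mulVec_mulVec, Pi.add_apply, ← add_assoc]
      rfl
    · have hz : ∀ a, T.mulVec (ML.mulVec (blk x (Fin.last k).castSucc))
          (Sum.inr a) = 0 := fun a => by
        rw [hT]; exact hbr _ ⟨_, rfl⟩ a
      rw [hlast]
      funext a
      rw [mulVec_add, Pi.add_apply, hz a, zero_add, mulVec_add, Pi.add_apply, mulVec_mulVec]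
      rfl
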